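/- Von Neumann entropy is subadditive: if ρ is a density matrix on ℂ^n ⊗ ℂ^m with partial traces ρ_1 = Tr_2(ρ) and ρ_2 = Tr_1(ρ), then ρ_1 and ρ_2 are density matrices and VN(ρ) ≤ VN(ρ_1) + VN(ρ_2). -/

import Mathlib

/-!
Both inequalities behind subadditivity are instances of Jensen for the concave function `-x log x`.

* The real diagonal of a Hermitian matrix is a doubly stochastic matrix applied to its eigenvalues,
  so the von Neumann entropy is at most the Shannon entropy of the diagonal.
* By the chain rule, a joint distribution has the Shannon entropy of one marginal plus the average
  entropy of the other coordinate conditioned on it, which is at most the other marginal's entropy.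

The marginals of the diagonal of `ρ` are the diagonals of its partial traces. In a product `U ⊗ V`
of eigenbases of `ρ₁` and `ρ₂` these diagonals are the eigenvalues of `ρ₁` and `ρ₂`, while `VN ρ`
does not depend on the basis.
-/

open Matrix ComplexOrder

/-- The von Neumann entropy of a matrix: the Shannon entropy of its
eigenvalues (with multiplicity) if it is Hermitian, `0` otherwise
(the junk value is never used for density matrices). -/
noncomputable def VN {ι : Type*} [Fintype ι] [DecidableEq ι]
    (ρ : Matrix ι ι ℂ) : ℝ :=
  if h : ρ.IsHermitian then
    -∑ i, h.eigenvalues i * Real.log (h.eigenvalues i)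
  else 0

/-- A density matrix: positive semidefinite with trace 1. -/
def IsDensityMatrix {ι : Type*} [Fintype ι] [DecidableEq ι]
    (ρ : Matrix ι ι ℂ) : Prop :=
  ρ.PosSemidef ∧ ρ.trace = 1

/-- Partial trace over the first factor. -/
noncomputable def ptrace1 {n m : ℕ}
    (ρ : Matrix (Fin n × Fin m) (Fin n × Fin m) ℂ) : Matrix (Fin m) (Fin m) ℂ :=
  Matrix.of fun j j' => ∑ i, ρ (i, j) (i, j')

/-- Partial trace over the second factor. -/
noncomputable def ptrace2 {n m : ℕ}
    (ρ : Matrix (Fin n × Fin m) (Fin n × Fin m) ℂ) : Matrix (Fin n) (Fin n) ℂ :=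
  Matrix.of fun i i' => ∑ j, ρ (i, j) (i', j)

open Kronecker

lemma sum_le_sum_mulVec_of_concaveOn {ι 𝕜 E : Type*} [Fintype ι] [DecidableEq ι]
    [Field 𝕜] [LinearOrder 𝕜] [IsStrictOrderedRing 𝕜] [AddCommGroup E] [PartialOrder E]
    [IsOrderedAddMonoid E] [Module 𝕜 E] [IsStrictOrderedModule 𝕜 E] {s : Set 𝕜} {f : 𝕜 → E}
    (hf : ConcaveOn 𝕜 s f) {M : Matrix ι ι 𝕜} (hM : M ∈ doublyStochastic 𝕜 ι) {x : ι → 𝕜}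
    (hx : ∀ i, x i ∈ s) : ∑ i, f (x i) ≤ ∑ i, f ((M *ᵥ x) i) :=
  calc ∑ k, f (x k) = ∑ k, (∑ i, M i k) • f (x k) := by
        simp only [sum_col_of_mem_doublyStochastic hM, one_smul]
    _ = ∑ i, ∑ k, M i k • f (x k) := by
        simp only [Finset.sum_smul]
        exact Finset.sum_comm
    _ ≤ ∑ i, f ((M *ᵥ x) i) := Finset.sum_le_sum fun i _ =>
        hf.le_map_sum (fun _ _ => nonneg_of_mem_doublyStochastic hM)
          (sum_row_of_mem_doublyStochastic hM i) fun k _ => hx k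

section Shannon

variable {ι α β : Type*} [Fintype ι] [Fintype α] [Fintype β]

/-- The Shannon entropy, in nats, of a finite family of weights; the weights are not required to
sum to `1`. -/
noncomputable def shannonEntropy (p : ι → ℝ) : ℝ :=
  ∑ i, Real.negMulLog (p i)

lemma shannonEntropy_le_shannonEntropy_mulVec [DecidableEq ι] {M : Matrix ι ι ℝ}
    (hM : M ∈ doublyStochastic ℝ ι) {p : ι → ℝ} (hp : ∀ i, 0 ≤ p i) :
    shannonEntropy p ≤ shannonEntropy (M *ᵥ p) :=
  sum_le_sum_mulVec_of_concaveOn Real.concaveOn_negMulLog hM hp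

lemma shannonEntropy_chain_rule {q : β → ℝ} {c : β → α → ℝ}
    (hc : ∀ b, q b ≠ 0 → ∑ a, c b a = 1) :
    shannonEntropy (fun x : α × β => q x.2 * c x.2 x.1) =
      ∑ b, q b * shannonEntropy (c b) + shannonEntropy q := by
  have hrow (b) : (∑ a, c b a) * Real.negMulLog (q b) = Real.negMulLog (q b) := by
    by_cases hb : q b = 0
    · simp [hb]
    · rw [hc b hb, one_mul]
  simp only [shannonEntropy, Fintype.sum_prod_type_right, Real.negMulLog_mul,
    Finset.sum_add_distrib, ← Finset.sum_mul, ← Finset.mul_sum, hrow]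
  rw [add_comm]

lemma sum_mul_shannonEntropy_le {q : β → ℝ} (hq : ∀ b, 0 ≤ q b) (hq_sum : ∑ b, q b = 1)
    {c : β → α → ℝ} (hc : ∀ b a, 0 ≤ c b a) :
    ∑ b, q b * shannonEntropy (c b) ≤ shannonEntropy fun a => ∑ b, q b * c b a := by
  simp only [shannonEntropy, Finset.mul_sum]
  rw [Finset.sum_comm]
  exact Finset.sum_le_sum fun a _ =>
    Real.concaveOn_negMulLog.le_map_sum (fun b _ => hq b) hq_sum fun b _ => hc b a

theorem shannonEntropy_le_add_marginals {d : α × β → ℝ} (hd : ∀ x, 0 ≤ d x)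
    (hd_sum : ∑ x, d x = 1) :
    shannonEntropy d ≤
      shannonEntropy (fun a => ∑ b, d (a, b)) + shannonEntropy (fun b => ∑ a, d (a, b)) := by
  set q : β → ℝ := fun b => ∑ a, d (a, b)
  have hq (b) : 0 ≤ q b := Finset.sum_nonneg fun a _ => hd (a, b)
  have hq_sum : ∑ b, q b = 1 := by rw [← hd_sum, Fintype.sum_prod_type_right]
  set condProb : β → α → ℝ := fun b a => d (a, b) / q b
  have hcond (b a) : 0 ≤ condProb b a := div_nonneg (hd _) (hq b)
  have hcond_sum (b) (hb : q b ≠ 0) : ∑ a, condProb b a = 1 := by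
    rw [← Finset.sum_div, div_self hb]
  have hq_mul_cond (a b) : q b * condProb b a = d (a, b) := by
    refine mul_div_cancel_of_imp' fun h => ?_
    exact (Finset.sum_eq_zero_iff_of_nonneg fun a _ => hd (a, b)).1 h a (Finset.mem_univ a)
  calc shannonEntropy d
      = ∑ b, q b * shannonEntropy (condProb b) + shannonEntropy q := by
        simp only [← shannonEntropy_chain_rule hcond_sum, hq_mul_cond]
    _ ≤ shannonEntropy (fun a => ∑ b, q b * condProb b a) + shannonEntropy q := by
        gcongr
        exact sum_mul_shannonEntropy_le hq hq_sum hcond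
    _ = shannonEntropy (fun a => ∑ b, d (a, b)) + shannonEntropy q := by
        simp only [hq_mul_cond]

end Shannon

section Diagonal

variable {ι 𝕜 : Type*} [Fintype ι] [DecidableEq ι] [RCLike 𝕜]

lemma map_norm_sq_mem_doublyStochastic {U : Matrix ι ι 𝕜} (hU : U ∈ unitaryGroup ι 𝕜) :
    U.map (‖·‖ ^ 2) ∈ doublyStochastic ℝ ι := by
  refine mem_doublyStochastic_iff_sum.2 ⟨fun i j => sq_nonneg _, fun i => ?_, fun j => ?_⟩
  · have h := congrFun (congrFun (mem_unitaryGroup_iff.1 hU) i) i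
    simp only [mul_apply, star_apply, RCLike.star_def, RCLike.mul_conj, one_apply_eq] at h
    exact_mod_cast h
  · have h := congrFun (congrFun (mem_unitaryGroup_iff'.1 hU) j) j
    simp only [mul_apply, star_apply, RCLike.star_def, RCLike.conj_mul, one_apply_eq] at h
    exact_mod_cast h

lemma re_diag_eq_mulVec_eigenvalues {A : Matrix ι ι 𝕜} (hA : A.IsHermitian) :
    (fun i => RCLike.re (A i i)) =
      (hA.eigenvectorUnitary : Matrix ι ι 𝕜).map (‖·‖ ^ 2) *ᵥ hA.eigenvalues := by
  ext i
  conv_lhs => rw [hA.spectral_theorem, Unitary.conjStarAlgAut_apply]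
  simp only [mul_apply (M := _ * _), mul_diagonal, star_apply, map_sum, mulVec, dotProduct,
    map_apply, Function.comp_apply]
  refine Finset.sum_congr rfl fun k _ => ?_
  rw [mul_right_comm, RCLike.star_def, RCLike.mul_conj]
  norm_cast

end Diagonal

section VonNeumann

variable {ι : Type*} [Fintype ι] [DecidableEq ι]

lemma VN_eq_shannonEntropy {A : Matrix ι ι ℂ} (hA : A.IsHermitian) :
    VN A = shannonEntropy hA.eigenvalues := by
  simp [VN, dif_pos hA, shannonEntropy, Real.negMulLog]

lemma VN_unitary_conj {A U : Matrix ι ι ℂ} (hA : A.IsHermitian) (hU : U ∈ unitaryGroup ι ℂ) :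
    VN (Uᴴ * A * U) = VN A := by
  have hUA : (Uᴴ * A * U).IsHermitian := isHermitian_conjTranspose_mul_mul U hA
  have hcharpoly : (Uᴴ * A * U).charpoly = A.charpoly := by
    rw [Matrix.mul_assoc, charpoly_mul_comm, Matrix.mul_assoc,
      show U * Uᴴ = 1 from mem_unitaryGroup_iff.1 hU, Matrix.mul_one]
  rw [VN_eq_shannonEntropy hUA, VN_eq_shannonEntropy hA,
    (hUA.eigenvalues_eq_eigenvalues_iff hA).2 hcharpoly]

theorem VN_le_shannonEntropy_diag {A : Matrix ι ι ℂ} (hA : A.PosSemidef) :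
    VN A ≤ shannonEntropy fun i => (A i i).re := by
  have hdiag : (fun i => (A i i).re) = _ := re_diag_eq_mulVec_eigenvalues hA.isHermitian
  rw [VN_eq_shannonEntropy hA.isHermitian, hdiag]
  exact shannonEntropy_le_shannonEntropy_mulVec
    (map_norm_sq_mem_doublyStochastic hA.isHermitian.eigenvectorUnitary.2) hA.eigenvalues_nonneg

lemma shannonEntropy_diag_conj_eigenvectorUnitary {A : Matrix ι ι ℂ} (hA : A.IsHermitian) :
    shannonEntropy (fun i => (((hA.eigenvectorUnitary : Matrix ι ι ℂ)ᴴ * A *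
      (hA.eigenvectorUnitary : Matrix ι ι ℂ)) i i).re) = VN A := by
  have h := hA.conjStarAlgAut_star_eigenvectorUnitary
  rw [Unitary.conjStarAlgAut_star_apply, star_eq_conjTranspose] at h
  simp [h, VN_eq_shannonEntropy hA]

lemma IsDensityMatrix.unitary_conj {A U : Matrix ι ι ℂ} (hA : IsDensityMatrix A)
    (hU : U ∈ unitaryGroup ι ℂ) : IsDensityMatrix (Uᴴ * A * U) := by
  refine ⟨hA.1.conjTranspose_mul_mul_same U, ?_⟩
  rw [trace_mul_cycle, show U * Uᴴ = 1 from mem_unitaryGroup_iff.1 hU, Matrix.one_mul, hA.2]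

end VonNeumann

section PartialTrace

variable {n m : ℕ} {ρ : Matrix (Fin n × Fin m) (Fin n × Fin m) ℂ}

lemma trace_ptrace2_mul (ρ : Matrix (Fin n × Fin m) (Fin n × Fin m) ℂ)
    (A : Matrix (Fin n) (Fin n) ℂ) : (ptrace2 ρ * A).trace = (ρ * (A ⊗ₖ 1)).trace := by
  simp only [trace, diag_apply, mul_apply, ptrace2, of_apply, kroneckerMap_apply, one_apply,
    Fintype.sum_prod_type, Finset.sum_mul, mul_ite, mul_one, mul_zero, Finset.sum_ite_eq',
    Finset.mem_univ, if_true]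
  exact Finset.sum_congr rfl fun i _ => Finset.sum_comm

lemma trace_ptrace1_mul (ρ : Matrix (Fin n × Fin m) (Fin n × Fin m) ℂ)
    (B : Matrix (Fin m) (Fin m) ℂ) : (ptrace1 ρ * B).trace = (ρ * (1 ⊗ₖ B)).trace := by
  simp only [trace, diag_apply, mul_apply, ptrace1, of_apply, kroneckerMap_apply, one_apply,
    Fintype.sum_prod_type_right, Finset.sum_mul, ite_mul, one_mul, zero_mul, mul_ite, mul_zero,
    Finset.sum_ite_eq', Finset.mem_univ, if_true]
  exact Finset.sum_congr rfl fun j _ => Finset.sum_comm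

lemma trace_conj_mul {ι κ R : Type*} [Fintype ι] [Fintype κ] [CommSemiring R] [Star R]
    (W : Matrix κ ι R) (A : Matrix κ κ R) (B : Matrix ι ι R) :
    (Wᴴ * A * W * B).trace = (A * (W * B * Wᴴ)).trace := by
  rw [Matrix.mul_assoc, Matrix.mul_assoc, trace_mul_comm]
  simp only [Matrix.mul_assoc]

lemma ptrace2_kronecker_conj (ρ : Matrix (Fin n × Fin m) (Fin n × Fin m) ℂ)
    (U : Matrix (Fin n) (Fin n) ℂ) {V : Matrix (Fin m) (Fin m) ℂ}
    (hV : V ∈ unitaryGroup (Fin m) ℂ) :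
    ptrace2 ((U ⊗ₖ V)ᴴ * ρ * (U ⊗ₖ V)) = Uᴴ * ptrace2 ρ * U := by
  have hVV : V * Vᴴ = 1 := mem_unitaryGroup_iff.1 hV
  refine ext_iff_trace_mul_right.2 fun A => ?_
  rw [trace_ptrace2_mul, trace_conj_mul, trace_conj_mul, trace_ptrace2_mul,
    conjTranspose_kronecker, ← mul_kronecker_mul, ← mul_kronecker_mul, Matrix.mul_one, hVV]

lemma ptrace1_kronecker_conj (ρ : Matrix (Fin n × Fin m) (Fin n × Fin m) ℂ)
    {U : Matrix (Fin n) (Fin n) ℂ} (hU : U ∈ unitaryGroup (Fin n) ℂ)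
    (V : Matrix (Fin m) (Fin m) ℂ) :
    ptrace1 ((U ⊗ₖ V)ᴴ * ρ * (U ⊗ₖ V)) = Vᴴ * ptrace1 ρ * V := by
  have hUU : U * Uᴴ = 1 := mem_unitaryGroup_iff.1 hU
  refine ext_iff_trace_mul_right.2 fun B => ?_
  rw [trace_ptrace1_mul, trace_conj_mul, trace_conj_mul, trace_ptrace1_mul,
    conjTranspose_kronecker, ← mul_kronecker_mul, ← mul_kronecker_mul, Matrix.mul_one, hUU]

lemma posSemidef_ptrace2 (hρ : ρ.PosSemidef) : (ptrace2 ρ).PosSemidef := by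
  have hsum : ptrace2 ρ = ∑ j, ρ.submatrix (·, j) (·, j) := by
    ext i i'
    simp [ptrace2, Matrix.sum_apply]
  rw [hsum]
  exact posSemidef_sum _ fun j _ => hρ.submatrix _

lemma posSemidef_ptrace1 (hρ : ρ.PosSemidef) : (ptrace1 ρ).PosSemidef := by
  have hsum : ptrace1 ρ = ∑ i, ρ.submatrix (i, ·) (i, ·) := by
    ext j j'
    simp [ptrace1, Matrix.sum_apply]
  rw [hsum]
  exact posSemidef_sum _ fun i _ => hρ.submatrix _

lemma trace_ptrace2 (ρ : Matrix (Fin n × Fin m) (Fin n × Fin m) ℂ) :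
    (ptrace2 ρ).trace = ρ.trace := by
  simpa using trace_ptrace2_mul ρ 1

lemma trace_ptrace1 (ρ : Matrix (Fin n × Fin m) (Fin n × Fin m) ℂ) :
    (ptrace1 ρ).trace = ρ.trace := by
  simpa using trace_ptrace1_mul ρ 1

lemma IsDensityMatrix.ptrace2 (hρ : IsDensityMatrix ρ) : IsDensityMatrix (ptrace2 ρ) :=
  ⟨posSemidef_ptrace2 hρ.1, (trace_ptrace2 ρ).trans hρ.2⟩

lemma IsDensityMatrix.ptrace1 (hρ : IsDensityMatrix ρ) : IsDensityMatrix (ptrace1 ρ) :=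
  ⟨posSemidef_ptrace1 hρ.1, (trace_ptrace1 ρ).trans hρ.2⟩

theorem VN_le_shannonEntropy_diag_ptrace (hρ : IsDensityMatrix ρ) :
    VN ρ ≤ shannonEntropy (fun i => (ptrace2 ρ i i).re) +
      shannonEntropy (fun j => (ptrace1 ρ j j).re) := by
  have hdiag_nonneg (x) : 0 ≤ (ρ x x).re := (Complex.nonneg_iff.1 hρ.1.diag_nonneg).1
  have hdiag_sum : ∑ x, (ρ x x).re = 1 := by
    simpa [trace] using congrArg Complex.re hρ.2
  simp only [ptrace2, ptrace1, of_apply, Complex.re_sum]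
  exact (VN_le_shannonEntropy_diag hρ.1).trans
    (shannonEntropy_le_add_marginals hdiag_nonneg hdiag_sum)

end PartialTrace

/-- von Neumann entropy is subadditive: the partial traces
`ρ₁ = Tr₂(ρ)` and `ρ₂ = Tr₁(ρ)` of a density matrix `ρ` are density matrices
and `VN(ρ) ≤ VN(ρ₁) + VN(ρ₂)`. -/
theorem vonNeumann_subadditive (n m : ℕ)
    (ρ : Matrix (Fin n × Fin m) (Fin n × Fin m) ℂ) (hρ : IsDensityMatrix ρ) :
    IsDensityMatrix (ptrace2 ρ) ∧ IsDensityMatrix (ptrace1 ρ) ∧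
    VN ρ ≤ VN (ptrace2 ρ) + VN (ptrace1 ρ) := by
  refine ⟨hρ.ptrace2, hρ.ptrace1, ?_⟩
  have h₁ := hρ.ptrace2.1.isHermitian
  have h₂ := hρ.ptrace1.1.isHermitian
  set U := h₁.eigenvectorUnitary
  set V := h₂.eigenvectorUnitary
  set W : Matrix (Fin n × Fin m) (Fin n × Fin m) ℂ := (U : Matrix _ _ ℂ) ⊗ₖ (V : Matrix _ _ ℂ)
  have hW : W ∈ unitaryGroup (Fin n × Fin m) ℂ := kronecker_mem_unitary U.2 V.2
  calc VN ρ = VN (Wᴴ * ρ * W) := (VN_unitary_conj hρ.1.isHermitian hW).symm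
    _ ≤ shannonEntropy (fun i => (ptrace2 (Wᴴ * ρ * W) i i).re) +
          shannonEntropy (fun j => (ptrace1 (Wᴴ * ρ * W) j j).re) :=
        VN_le_shannonEntropy_diag_ptrace (hρ.unitary_conj hW)
    _ = VN (ptrace2 ρ) + VN (ptrace1 ρ) := by
        rw [ptrace2_kronecker_conj ρ _ V.2, ptrace1_kronecker_conj ρ U.2,
          shannonEntropy_diag_conj_eigenvectorUnitary h₁,
          shannonEntropy_diag_conj_eigenvectorUnitary h₂]
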